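/- arXiv:math/0008224 — 2 statements merged into one kernel-verified Lean document; each statement's English description precedes it below -/
import Mathlib

section
/- Let k = 2k₁ be even, let ℓ ≥ 2 be even, and let X = R†_{k×k,ℓ}, with minimal-weight subspace X^{(ℓ)} = X ∩ span{u(m₁,m₂) : u ∈ A, m₁+m₂+1 = ℓ} and product u ∘ v = u⁽ˡ⁻¹⁾v ((ℓ-1)-th product) on X^{(ℓ)}. Then X^{(ℓ)} = {w(0,ℓ-1) : w ∈ A, w† = w}, for all w, w' ∈ A with w† = w and w'† = w' one has w(0,ℓ-1) ∘ w'(0,ℓ-1) = -(ww'+w'w)(0,ℓ-1), and the linear map w ↦ -w(0,ℓ-1) is an isomorphism from the Jordan algebra {w ∈ A : w† = w} (with product w∗w' = ww'+w'w) onto (X^{(ℓ)}, ∘); hence (X^{(ℓ)}, ∘) is a simple Jordan algebra of type C, independent of ℓ. -/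
/-- The carrier of `R_{k×k} = M_k(F) ⊗ F[t₁,t₂]`: the element `u(m,n) = u ⊗ t₁^m t₂^n`
is encoded as `Finsupp.single (m, n) u`. -/
abbrev MatCarrier (F : Type*) [Field F] (k : ℕ) :=
  (ℕ × ℕ) →₀ Matrix (Fin k) (Fin k) F

/-- The operator `∂` on `R_{k×k}`:
`∂(u(m,n)) = (m+1)·u(m+1,n) + (n+1)·u(m,n+1)`. -/
noncomputable def mD (F : Type*) [Field F] (k : ℕ) :
    MatCarrier F k → MatCarrier F k :=
  fun f => f.sum fun p u =>
    (((p.1 + 1 : ℕ) : F)) • Finsupp.single (p.1 + 1, p.2) u +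
    (((p.2 + 1 : ℕ) : F)) • Finsupp.single (p.1, p.2 + 1) u

/-- The `s`-th product on `R_{k×k}`: the coefficient of `z^{-s-1}` in
`Y⁺(u(m₁,m₂),z)(v(n₁,n₂)) =
  binom(-n₁-1,m₂)·Σ_p binom(p,m₁)·(uv)(p,n₂)·z^{p-m₁-m₂-n₁-1}
  - binom(-n₂-1,m₁)·Σ_q binom(q,m₂)·(vu)(n₁,q)·z^{q-m₁-m₂-n₂-1}`,
extended bilinearly, where `binom(-a-1,b) = (-1)^b·binom(a+b,b)`. -/
noncomputable def mProd (F : Type*) [Field F] (k : ℕ) (s : ℕ)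
    (f g : MatCarrier F k) : MatCarrier F k :=
  f.sum fun p u => g.sum fun q v =>
    (if s ≤ p.1 + p.2 + q.1 then
      ((-1 : F) ^ p.2 * ((q.1 + p.2).choose p.2 : F) *
        ((p.1 + p.2 + q.1 - s).choose p.1 : F)) •
        Finsupp.single (p.1 + p.2 + q.1 - s, q.2) (u * v)
     else 0) -
    (if s ≤ p.1 + p.2 + q.2 then
      ((-1 : F) ^ p.1 * ((q.2 + p.1).choose p.1 : F) *
        ((p.1 + p.2 + q.2 - s).choose p.2 : F)) •
        Finsupp.single (q.1, p.1 + p.2 + q.2 - s) (v * u)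
     else 0)

/-- The weight space `R_{k×k}^{(n)} = span{u(m₁,m₂) : m₁ + m₂ + 1 = n}`. -/
noncomputable def mWeight (F : Type*) [Field F] (k : ℕ) (n : ℕ) :
    Submodule F (MatCarrier F k) :=
  Submodule.span F {x | ∃ (u : Matrix (Fin k) (Fin k) F) (m₁ m₂ : ℕ),
    m₁ + m₂ + 1 = n ∧ x = Finsupp.single (m₁, m₂) u}

/-- For even `k = k₁ + k₁`, the involutive anti-automorphism
`u† = [[0,-I],[I,0]] · uᵀ · [[0,I],[-I,0]]` of `M_k(F)`. -/
noncomputable def mDagger (F : Type*) [Field F] (k₁ : ℕ)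
    (u : Matrix (Fin (k₁ + k₁)) (Fin (k₁ + k₁)) F) :
    Matrix (Fin (k₁ + k₁)) (Fin (k₁ + k₁)) F :=
  (Matrix.reindex finSumFinEquiv finSumFinEquiv
      (Matrix.fromBlocks (0 : Matrix (Fin k₁) (Fin k₁) F) (-1) 1 0)) *
    u.transpose *
  (Matrix.reindex finSumFinEquiv finSumFinEquiv
      (Matrix.fromBlocks (0 : Matrix (Fin k₁) (Fin k₁) F) 1 (-1) 0))

/-- The subspace `R†_{k×k,ℓ} = span{binom(n+ℓ-1,ℓ-1)·u(m,n+ℓ-1)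
- (-1)^{ℓ-1}·binom(m+ℓ-1,ℓ-1)·u†(n,m+ℓ-1) : u ∈ A, m, n ∈ ℕ}` (`ℓ ≥ 1`, `k = k₁+k₁`). -/
noncomputable def RkklDagger (F : Type*) [Field F] (k₁ ℓ : ℕ) :
    Submodule F (MatCarrier F (k₁ + k₁)) :=
  Submodule.span F {x | ∃ (u : Matrix (Fin (k₁ + k₁)) (Fin (k₁ + k₁)) F) (m n : ℕ),
    x = (((n + ℓ - 1).choose (ℓ - 1) : F)) • Finsupp.single (m, n + ℓ - 1) u -
        ((-1 : F) ^ (ℓ - 1) * (((m + ℓ - 1).choose (ℓ - 1) : F))) •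
          Finsupp.single (n, m + ℓ - 1) (mDagger F k₁ u)}

/-- The elements `w(0,ℓ-1)` with `w† = w`. -/
noncomputable def dagMinSet (F : Type*) [Field F] (k₁ ℓ : ℕ) :
    Set (MatCarrier F (k₁ + k₁)) :=
  {x | ∃ w : Matrix (Fin (k₁ + k₁)) (Fin (k₁ + k₁)) F, mDagger F k₁ w = w ∧
    x = Finsupp.single ((0 : ℕ), ℓ - 1) w}


open Matrix in
theorem mDagger_exists_J (F : Type*) [Field F] (k₁ : ℕ) :
    ∃ J : Matrix (Fin (k₁ + k₁)) (Fin (k₁ + k₁)) F, J * J = -1 ∧ J.transpose = -J ∧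
      ∀ u, mDagger F k₁ u = -(J * u.transpose * J) := by
  refine ⟨Matrix.reindex finSumFinEquiv finSumFinEquiv
      (Matrix.fromBlocks (0 : Matrix (Fin k₁) (Fin k₁) F) (-1) 1 0), ?_, ?_, ?_⟩
  · rw [Matrix.reindex_apply, Matrix.submatrix_mul_equiv, Matrix.fromBlocks_multiply]
    ext i j
    obtain ⟨i, rfl⟩ := finSumFinEquiv.surjective i
    obtain ⟨j, rfl⟩ := finSumFinEquiv.surjective j
    simp only [Matrix.reindex_apply, Matrix.submatrix_apply, Matrix.neg_apply, Matrix.one_apply,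
      Equiv.symm_apply_apply, finSumFinEquiv.injective.eq_iff]
    rcases i with i | i <;> rcases j with j | j <;> simp [Matrix.one_apply]
  · rw [Matrix.reindex_apply, Matrix.transpose_submatrix, Matrix.fromBlocks_transpose]
    ext i j
    obtain ⟨i, rfl⟩ := finSumFinEquiv.surjective i
    obtain ⟨j, rfl⟩ := finSumFinEquiv.surjective j
    simp only [Matrix.reindex_apply, Matrix.submatrix_apply, Matrix.neg_apply, Matrix.one_apply,
      Equiv.symm_apply_apply, finSumFinEquiv.injective.eq_iff]
    rcases i with i | i <;> rcases j with j | j <;> simp [Matrix.one_apply]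
  · intro u
    unfold mDagger
    rw [← mul_neg]
    congr 1
    ext i j
    obtain ⟨i, rfl⟩ := finSumFinEquiv.surjective i
    obtain ⟨j, rfl⟩ := finSumFinEquiv.surjective j
    simp only [Matrix.reindex_apply, Matrix.submatrix_apply, Matrix.neg_apply, Matrix.one_apply,
      Equiv.symm_apply_apply, finSumFinEquiv.injective.eq_iff]
    rcases i with i | i <;> rcases j with j | j <;> simp [Matrix.one_apply]

theorem mDagger_add (F : Type*) [Field F] (k₁ : ℕ) (u v) :
    mDagger F k₁ (u + v) = mDagger F k₁ u + mDagger F k₁ v := by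
  obtain ⟨J, -, -, h⟩ := mDagger_exists_J F k₁
  simp only [h, Matrix.transpose_add]
  noncomm_ring

theorem mDagger_smul (F : Type*) [Field F] (k₁ : ℕ) (c : F) (v) :
    mDagger F k₁ (c • v) = c • mDagger F k₁ v := by
  obtain ⟨J, -, -, h⟩ := mDagger_exists_J F k₁
  simp [h, Matrix.transpose_smul]

theorem mDagger_mul (F : Type*) [Field F] (k₁ : ℕ) (u v) :
    mDagger F k₁ (u * v) = mDagger F k₁ v * mDagger F k₁ u := by
  obtain ⟨J, hJ, -, h⟩ := mDagger_exists_J F k₁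
  simp only [h, Matrix.transpose_mul]
  have : -(J * v.transpose * J) * -(J * u.transpose * J)
    = J * v.transpose * (J * J) * u.transpose * J := by noncomm_ring
  rw [this, hJ]
  noncomm_ring

theorem mDagger_mDagger (F : Type*) [Field F] (k₁ : ℕ) (u) :
    mDagger F k₁ (mDagger F k₁ u) = u := by
  obtain ⟨J, hJ, hT, h⟩ := mDagger_exists_J F k₁
  simp only [h, Matrix.transpose_mul, Matrix.transpose_neg, hT, Matrix.transpose_transpose]
  have : -(J * -(-J * (u * -J)) * J) = (J * J) * u * (J * J) := by noncomm_ring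
  rw [this, hJ]
  noncomm_ring

theorem mDagger_one (F : Type*) [Field F] (k₁ : ℕ) :
    mDagger F k₁ 1 = 1 := by
  obtain ⟨J, hJ, hT, h⟩ := mDagger_exists_J F k₁
  simp [h, hJ]

/-- The `†`-symmetric matrices. -/
noncomputable def dagSym (F : Type*) [Field F] (k₁ : ℕ) :
    Submodule F (Matrix (Fin (k₁ + k₁)) (Fin (k₁ + k₁)) F) where
  carrier := {w | mDagger F k₁ w = w}
  add_mem' := by
    intro a b ha hb
    simp only [Set.mem_ofPred_eq] at *
    rw [mDagger_add, ha, hb]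
  zero_mem' := by
    simpa using mDagger_smul F k₁ 0 0
  smul_mem' := by
    intro c a ha
    simp only [Set.mem_ofPred_eq] at *
    rw [mDagger_smul, ha]

theorem mem_dagSym {F : Type*} [Field F] {k₁ : ℕ} {w} :
    w ∈ dagSym F k₁ ↔ mDagger F k₁ w = w := Iff.rfl

theorem dagMinSet_eq (F : Type*) [Field F] (k₁ ℓ : ℕ) :
    dagMinSet F k₁ ℓ = ((dagSym F k₁).map (Finsupp.lsingle ((0 : ℕ), ℓ - 1)) : Submodule F _) := by
  ext x
  simp only [dagMinSet, Set.mem_ofPred_eq, SetLike.mem_coe, Submodule.mem_map, mem_dagSym,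
    Finsupp.lsingle_apply]
  constructor
  · rintro ⟨w, h, rfl⟩; exact ⟨w, h, rfl⟩
  · rintro ⟨w, h, rfl⟩; exact ⟨w, h, rfl⟩

theorem mProd_min (F : Type*) [Field F] (k ℓ : ℕ) (hℓ : 2 ≤ ℓ) (heven : Even ℓ)
    (w w' : Matrix (Fin k) (Fin k) F) :
      mProd F k (ℓ - 1) (Finsupp.single ((0 : ℕ), ℓ - 1) w)
          (Finsupp.single ((0 : ℕ), ℓ - 1) w')
        = -(Finsupp.single ((0 : ℕ), ℓ - 1) (w * w' + w' * w)) := by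
  have hodd : Odd (ℓ - 1) := Nat.Even.sub_odd (by omega) heven odd_one
  unfold mProd
  rw [Finsupp.sum_single_index, Finsupp.sum_single_index]
  · simp [hodd.neg_one_pow, Finsupp.single_add]
    abel
  · simp
  · simp

/-- Nonvanishing locus of a bilinear form generates. -/
theorem bilin_generate {F V W M : Type*} [Field F] [AddCommGroup V] [AddCommGroup W]
    [AddCommGroup M] [Module F V] [Module F W] [Module F M]
    (B : V → W → F) (hB1 : ∀ a b c, B (a + b) c = B a c + B b c)
    (hB2 : ∀ a b c, B a (b + c) = B a b + B a c)
    (f : V → W → M) (hf1 : ∀ a b c, f (a + b) c = f a c + f b c)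
    (hf2 : ∀ a b c, f a (b + c) = f a b + f a c)
    (S : Submodule F M) (h : ∀ p q, B p q ≠ 0 → f p q ∈ S)
    (r : V) (s : W) (hrs : B r s ≠ 0) (p : V) (q : W) : f p q ∈ S := by
  by_cases hpq : B p q = 0
  swap
  · exact h _ _ hpq
  have key1 : ∀ p, B p q = 0 → B p s ≠ 0 → f p q ∈ S := by
    intro p hpq hps
    have h1 := h p s hps
    have h2 := h p (q + s) (by rw [hB2, hpq, zero_add]; exact hps)
    rw [hf2] at h2
    exact (Submodule.add_mem_iff_left S h1).1 h2
  by_cases hps : B p s = 0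
  swap
  · exact key1 p hpq hps
  by_cases hrq : B r q = 0
  swap
  · have h1 := h r q hrq
    have h2 := h (p + r) q (by rw [hB1, hpq, zero_add]; exact hrq)
    rw [hf1] at h2
    exact (Submodule.add_mem_iff_left S h1).1 h2
  have h1 := key1 r hrq hrs
  have h2 := key1 (p + r) (by rw [hB1, hpq, hrq, zero_add]) (by rw [hB1, hps, zero_add]; exact hrs)
  rw [hf1] at h2
  exact (Submodule.add_mem_iff_left S h1).1 h2

open Matrix in
theorem skew_dot {F n : Type*} [Field F] [CharZero F] [Fintype n]
    (M : Matrix n n F) (hM : M.transpose = -M) (v : n → F) : v ⬝ᵥ (M *ᵥ v) = 0 := by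
  have h1 : v ⬝ᵥ (M *ᵥ v) = v ⬝ᵥ (Mᵀ *ᵥ v) := by
    rw [Matrix.mulVec_transpose, Matrix.dotProduct_mulVec, dotProduct_comm]
  rw [hM, Matrix.neg_mulVec, dotProduct_neg] at h1
  exact self_eq_neg.1 h1

open Matrix in
theorem sandwich {F n : Type*} [Field F] [Fintype n] (p r p' r' : n → F) (b : Matrix n n F) :
    vecMulVec p r * b * vecMulVec p' r' = (r ⬝ᵥ (b *ᵥ p')) • vecMulVec p r' := by
  rw [Matrix.vecMulVec_mul, Matrix.vecMulVec_mul_vecMulVec, ← Matrix.dotProduct_mulVec,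
    Matrix.vecMulVec_smul]

open Matrix in
theorem dag_vecMulVec (F : Type*) [Field F] [CharZero F] (k₁ : ℕ)
    (b : Matrix (Fin (k₁ + k₁)) (Fin (k₁ + k₁)) F) (hb : mDagger F k₁ b = b)
    (p r : Fin (k₁ + k₁) → F) :
    (vecMulVec p r + mDagger F k₁ (vecMulVec p r)) * b *
      (vecMulVec p r + mDagger F k₁ (vecMulVec p r)) =
      (r ⬝ᵥ (b *ᵥ p)) • (vecMulVec p r + mDagger F k₁ (vecMulVec p r)) := by
  have e1 := sandwich p r p r b
  have e2 : mDagger F k₁ (vecMulVec p r) * b * mDagger F k₁ (vecMulVec p r) =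
      (r ⬝ᵥ (b *ᵥ p)) • mDagger F k₁ (vecMulVec p r) := by
    rw [← mDagger_smul, ← e1, mDagger_mul, mDagger_mul, hb, mul_assoc]
  obtain ⟨J, hJ, hT, h⟩ := mDagger_exists_J F k₁
  have hb' := hb
  rw [h] at hb'
  have hbJ : b * J = J * bᵀ := by
    calc b * J = -(J * bᵀ * J) * J := by rw [hb']
      _ = -(J * bᵀ * (J * J)) := by noncomm_ring
      _ = _ := by rw [hJ]; noncomm_ring
  have hJb : J * b = bᵀ * J := by
    calc J * b = J * -(J * bᵀ * J) := by rw [hb']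
      _ = -((J * J) * bᵀ * J) := by noncomm_ring
      _ = _ := by rw [hJ]; noncomm_ring
  have e3 : vecMulVec p r * b * mDagger F k₁ (vecMulVec p r) = 0 := by
    have : vecMulVec p r * b * mDagger F k₁ (vecMulVec p r) =
      -((vecMulVec p r * (b * J) * vecMulVec r p) * J) := by
      rw [h, transpose_vecMulVec]; noncomm_ring
    rw [this, sandwich, skew_dot]
    · simp
    · rw [transpose_mul, hT, hbJ]; noncomm_ring
  have e4 : mDagger F k₁ (vecMulVec p r) * b * vecMulVec p r = 0 := by
    have : mDagger F k₁ (vecMulVec p r) * b * vecMulVec p r =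
      -(J * (vecMulVec r p * (J * b) * vecMulVec p r)) := by
      rw [h, transpose_vecMulVec]; noncomm_ring
    rw [this, sandwich, skew_dot]
    · simp
    · rw [transpose_mul, hT, hJb]; noncomm_ring
  rw [add_mul, add_mul, mul_add, mul_add, e1, e2, e3, e4, smul_add]
  abel

theorem dag_add_mem (F : Type*) [Field F] (k₁ : ℕ) (u) : u + mDagger F k₁ u ∈ dagSym F k₁ := by
  rw [mem_dagSym, mDagger_add, mDagger_mDagger, add_comm u]

theorem jordan_mem (F : Type*) [Field F] (k₁ : ℕ) {a b} (ha : a ∈ dagSym F k₁)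
    (hb : b ∈ dagSym F k₁) : a * b + b * a ∈ dagSym F k₁ := by
  rw [mem_dagSym] at *
  rw [mDagger_add, mDagger_mul, mDagger_mul, ha, hb, add_comm (a * b)]

open Matrix in
theorem dagSym_simple (F : Type*) [Field F] [CharZero F] (k₁ : ℕ)
    (I : Submodule F (Matrix (Fin (k₁ + k₁)) (Fin (k₁ + k₁)) F)) (hI : I ≤ dagSym F k₁)
    (hid : ∀ a ∈ dagSym F k₁, ∀ b ∈ I, a * b + b * a ∈ I) (b) (hb : b ∈ I) (hb0 : b ≠ 0) :
    dagSym F k₁ ≤ I := by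
  have two : (2 : F) ≠ 0 := two_ne_zero
  have hU : ∀ a ∈ dagSym F k₁, a * b * a ∈ I := by
    intro a ha
    have haa : a * a ∈ dagSym F k₁ := by
      rw [mem_dagSym] at *
      rw [mDagger_mul, ha]
    have h1 := hid a ha _ (hid a ha b hb)
    have h2 := hid _ haa b hb
    have h3 := I.smul_mem (2 : F)⁻¹ (I.sub_mem h1 h2)
    have : a * (a * b + b * a) + (a * b + b * a) * a - (a * a * b + b * (a * a))
      = (2 : F) • (a * b * a) := by
      rw [two_smul]; noncomm_ring
    rwa [this, smul_smul, inv_mul_cancel₀ two, one_smul] at h3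
  obtain ⟨i, j, hij⟩ : ∃ i j, b i j ≠ 0 := by
    by_contra! hc
    exact hb0 (Matrix.ext hc)
  have hall : ∀ p r : Fin (k₁ + k₁) → F, vecMulVec p r + mDagger F k₁ (vecMulVec p r) ∈ I := by
    refine bilin_generate (F := F) (fun p r => r ⬝ᵥ (b *ᵥ p)) ?_ ?_
      (fun p r => vecMulVec p r + mDagger F k₁ (vecMulVec p r)) ?_ ?_ I ?_
      (Pi.single j 1) (Pi.single i 1) ?_
    · intro x y z; simp [Matrix.mulVec_add]
    · intro x y z; simp
    · intro x y z; simp only [add_vecMulVec, mDagger_add]; abel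
    · intro x y z; simp only [vecMulVec_add, mDagger_add]; abel
    · intro p r hpr
      have h1 := hU _ (dag_add_mem F k₁ (vecMulVec p r))
      rw [dag_vecMulVec F k₁ b (hI hb)] at h1
      exact (Submodule.smul_mem_iff I hpr).1 h1
    · simpa using hij
  have hall2 : ∀ u : Matrix (Fin (k₁ + k₁)) (Fin (k₁ + k₁)) F, u + mDagger F k₁ u ∈ I := by
    intro u
    induction u using Matrix.induction_on' with
    | h_zero => simpa using hall 0 0
    | h_add p q hp hq =>
      rw [mDagger_add, add_add_add_comm]
      exact I.add_mem hp hq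
    | h_std_basis i j x =>
      have : Matrix.single i j x = vecMulVec (Pi.single i x) (Pi.single j 1) := by
        ext a c
        simp [Matrix.single, vecMulVec, Pi.single_apply, ← ite_and, eq_comm, and_comm]
      rw [this]
      exact hall _ _
  intro w hw
  have h1 := I.smul_mem (2 : F)⁻¹ (hall2 w)
  rw [mem_dagSym] at hw
  rwa [hw, ← two_smul F w, smul_smul, inv_mul_cancel₀ two, one_smul] at h1

theorem min_weight_eq (F : Type*) [Field F] [CharZero F] (k₁ ℓ : ℕ) (hℓ : 2 ≤ ℓ)
    (heven : Even ℓ) :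
    ((RkklDagger F k₁ ℓ ⊓ mWeight F (k₁ + k₁) ℓ :
        Submodule F (MatCarrier F (k₁ + k₁))) : Set (MatCarrier F (k₁ + k₁)))
      = dagMinSet F k₁ ℓ := by
  have hodd : Odd (ℓ - 1) := Nat.Even.sub_odd (by omega) heven odd_one
  apply Set.Subset.antisymm
  · rintro x ⟨hx, hw⟩
    have h1 : ∀ i j, i + j + 1 ≠ ℓ → x (i, j) = 0 := by
      intro i j hij
      refine Submodule.span_induction (p := fun x _ => x (i, j) = 0) ?_ rfl ?_ ?_ hw
      · rintro _ ⟨u, m, n, h, rfl⟩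
        apply Finsupp.single_eq_of_ne
        rintro ⟨⟩
        exact hij h
      · intro a b _ _ ha hb
        simp [ha, hb]
      · intro c a _ ha
        simp [ha]
    have h2 : ∀ i j, j < ℓ - 1 → x (i, j) = 0 := by
      intro i j hij
      refine Submodule.span_induction (p := fun x _ => x (i, j) = 0) ?_ rfl ?_ ?_ hx
      · rintro _ ⟨u, m, n, rfl⟩
        rw [Finsupp.sub_apply, Finsupp.smul_apply, Finsupp.smul_apply,
          Finsupp.single_eq_of_ne, Finsupp.single_eq_of_ne]
        · simp
        · rintro ⟨⟩; omega
        · rintro ⟨⟩; omega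
      · intro a b _ _ ha hb
        simp [ha, hb]
      · intro c a _ ha
        simp [ha]
    have h3 : x (0, ℓ - 1) ∈ dagSym F k₁ := by
      refine Submodule.span_induction (p := fun x _ => x (0, ℓ - 1) ∈ dagSym F k₁) ?_ ?_ ?_ ?_ hx
      · rintro _ ⟨u, m, n, rfl⟩
        by_cases hmn : m = 0 ∧ n = 0
        · obtain ⟨rfl, rfl⟩ := hmn
          simpa [hodd.neg_one_pow] using dag_add_mem F k₁ u
        · rw [Finsupp.sub_apply, Finsupp.smul_apply, Finsupp.smul_apply,
            Finsupp.single_eq_of_ne, Finsupp.single_eq_of_ne]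
          · simp
          · intro h
            rw [Prod.mk.injEq] at h; omega
          · intro h
            rw [Prod.mk.injEq] at h; omega
      · exact (dagSym F k₁).zero_mem
      · intro a b _ _ ha hb
        exact (dagSym F k₁).add_mem ha hb
      · intro c a _ ha
        exact (dagSym F k₁).smul_mem c ha
    refine ⟨_, h3, ?_⟩
    ext1 ⟨i, j⟩
    by_cases hij : (i, j) = (0, ℓ - 1)
    · rw [hij, Finsupp.single_eq_same]
    · rw [Finsupp.single_eq_of_ne hij]
      by_cases h : i + j + 1 = ℓ
      · apply h2
        by_contra hc
        exact hij (by rw [Prod.mk.injEq]; omega)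
      · exact h1 _ _ h
  · rintro _ ⟨w, hw, rfl⟩
    refine ⟨?_, Submodule.subset_span ⟨w, 0, ℓ - 1, by omega, rfl⟩⟩
    refine Submodule.subset_span ⟨(2 : F)⁻¹ • w, 0, 0, ?_⟩
    simp only [mDagger_smul, hw, hodd.neg_one_pow, zero_add, Nat.choose_self, Nat.cast_one,
      one_smul, mul_one, neg_smul, sub_neg_eq_add, ← Finsupp.single_add, ← add_smul]
    congr 1
    rw [← two_mul (2 : F)⁻¹, mul_inv_cancel₀ two_ne_zero, one_smul]

/-- **Theorem 4.3, type C**: let `k = 2k₁` be even, `ℓ ≥ 2` even, `X = R†_{k×k,ℓ}`,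
with minimal-weight subspace `X^{(ℓ)} = X ∩ R_{k×k}^{(ℓ)}` and product
`x ∘ y = x⁽ˡ⁻¹⁾y`.  Then `X^{(ℓ)} = {w(0,ℓ-1) : w† = w}`, on it
`w(0,ℓ-1) ∘ w'(0,ℓ-1) = -(ww'+w'w)(0,ℓ-1)`, the map `w ↦ -w(0,ℓ-1)` is an
isomorphism from the Jordan algebra `{w : w† = w}` onto `(X^{(ℓ)}, ∘)`, and
`(X^{(ℓ)}, ∘)` is a simple Jordan algebra (of type C, independent of `ℓ`). -/
theorem RkklDagger_minimal_weight_jordan_typeC (F : Type*) [Field F] [CharZero F]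
    (k₁ ℓ : ℕ) (hk₁ : 1 ≤ k₁) (hℓ : 2 ≤ ℓ) (heven : Even ℓ) :
    -- identification of the minimal-weight subspace
    ((RkklDagger F k₁ ℓ ⊓ mWeight F (k₁ + k₁) ℓ :
        Submodule F (MatCarrier F (k₁ + k₁))) : Set (MatCarrier F (k₁ + k₁)))
      = dagMinSet F k₁ ℓ ∧
    -- the product formula
    (∀ w w' : Matrix (Fin (k₁ + k₁)) (Fin (k₁ + k₁)) F,
      mDagger F k₁ w = w → mDagger F k₁ w' = w' →
      mProd F (k₁ + k₁) (ℓ - 1) (Finsupp.single ((0 : ℕ), ℓ - 1) w)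
          (Finsupp.single ((0 : ℕ), ℓ - 1) w')
        = -(Finsupp.single ((0 : ℕ), ℓ - 1) (w * w' + w' * w))) ∧
    -- w ↦ -w(0,ℓ-1) is an isomorphism from {w : w† = w} onto (X^{(ℓ)}, ∘)
    (Set.InjOn (fun w : Matrix (Fin (k₁ + k₁)) (Fin (k₁ + k₁)) F =>
        -(Finsupp.single ((0 : ℕ), ℓ - 1) w : MatCarrier F (k₁ + k₁)))
      {w | mDagger F k₁ w = w}) ∧
    ((fun w : Matrix (Fin (k₁ + k₁)) (Fin (k₁ + k₁)) F =>
        -(Finsupp.single ((0 : ℕ), ℓ - 1) w : MatCarrier F (k₁ + k₁))) ''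
      {w | mDagger F k₁ w = w} = dagMinSet F k₁ ℓ) ∧
    (∀ w w' : Matrix (Fin (k₁ + k₁)) (Fin (k₁ + k₁)) F,
      mDagger F k₁ w = w → mDagger F k₁ w' = w' →
      -(Finsupp.single ((0 : ℕ), ℓ - 1) (w * w' + w' * w) : MatCarrier F (k₁ + k₁))
        = mProd F (k₁ + k₁) (ℓ - 1) (-(Finsupp.single ((0 : ℕ), ℓ - 1) w))
            (-(Finsupp.single ((0 : ℕ), ℓ - 1) w'))) ∧
    -- (X^{(ℓ)}, ∘) is a simple Jordan algebra
    (∀ x ∈ dagMinSet F k₁ ℓ, ∀ y ∈ dagMinSet F k₁ ℓ,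
      mProd F (k₁ + k₁) (ℓ - 1) x y ∈ dagMinSet F k₁ ℓ ∧
      mProd F (k₁ + k₁) (ℓ - 1) x y = mProd F (k₁ + k₁) (ℓ - 1) y x ∧
      mProd F (k₁ + k₁) (ℓ - 1)
          (mProd F (k₁ + k₁) (ℓ - 1) (mProd F (k₁ + k₁) (ℓ - 1) x x) y) x
        = mProd F (k₁ + k₁) (ℓ - 1) (mProd F (k₁ + k₁) (ℓ - 1) x x)
            (mProd F (k₁ + k₁) (ℓ - 1) y x)) ∧
    (∃ x ∈ dagMinSet F k₁ ℓ, ∃ y ∈ dagMinSet F k₁ ℓ,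
      mProd F (k₁ + k₁) (ℓ - 1) x y ≠ 0) ∧
    (∀ I : Submodule F (MatCarrier F (k₁ + k₁)),
      I ≤ Submodule.span F (dagMinSet F k₁ ℓ) →
      (∀ a ∈ dagMinSet F k₁ ℓ, ∀ b ∈ I, mProd F (k₁ + k₁) (ℓ - 1) a b ∈ I) →
      I = ⊥ ∨ I = Submodule.span F (dagMinSet F k₁ ℓ)) := by
  have hP := mProd_min F (k₁ + k₁) ℓ hℓ heven
  have hneg : ∀ w : Matrix (Fin (k₁ + k₁)) (Fin (k₁ + k₁)) F,
      -(Finsupp.single ((0 : ℕ), ℓ - 1) w : MatCarrier F (k₁ + k₁)) =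
        Finsupp.single ((0 : ℕ), ℓ - 1) (-w) := fun w => (Finsupp.single_neg _ _).symm
  refine ⟨min_weight_eq F k₁ ℓ hℓ heven, fun w w' _ _ => hP w w', ?_, ?_, ?_, ?_, ?_, ?_⟩
  · intro a _ b _ hab
    exact Finsupp.single_injective _ (neg_injective hab)
  · ext x
    constructor
    · rintro ⟨w, hw, rfl⟩
      exact ⟨-w, (dagSym F k₁).neg_mem hw, hneg w⟩
    · rintro ⟨w, hw, rfl⟩
      exact ⟨-w, (dagSym F k₁).neg_mem hw, by simp⟩
  · intro w w' _ _
    rw [hneg w, hneg w', hP]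
    simp
  · rintro _ ⟨x, hx, rfl⟩ _ ⟨y, hy, rfl⟩
    refine ⟨?_, ?_, ?_⟩
    · rw [hP, hneg]
      exact ⟨_, (dagSym F k₁).neg_mem (jordan_mem F k₁ hx hy), rfl⟩
    · rw [hP, hP, add_comm (x * y)]
    · simp only [hP, hneg]
      congr 1
      noncomm_ring
  · refine ⟨_, ⟨1, mDagger_one F k₁, rfl⟩, _, ⟨1, mDagger_one F k₁, rfl⟩, ?_⟩
    rw [hP, neg_ne_zero, Finsupp.single_ne_zero]
    intro h
    have := congrFun (congrFun h ⟨0, by omega⟩) ⟨0, by omega⟩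
    simp at this
  · intro I hI hid
    rw [dagMinSet_eq, Submodule.span_eq] at hI
    rw [dagMinSet_eq, Submodule.span_eq]
    by_cases h0 : I = ⊥
    · exact Or.inl h0
    right
    obtain ⟨x, hx, hx0⟩ := Submodule.exists_mem_ne_zero_of_ne_bot h0
    obtain ⟨b, hb, rfl⟩ := hI hx
    refine le_antisymm hI ?_
    rw [Submodule.map_le_iff_le_comap]
    refine dagSym_simple F k₁ _ ?_ ?_ b hx ?_
    · intro w hw
      obtain ⟨w', hw', h⟩ := hI hw
      rw [← Finsupp.single_injective _ h]
      exact hw'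
    · intro a ha c hc
      have := hid _ ⟨a, ha, rfl⟩ _ hc
      rw [Finsupp.lsingle_apply, hP] at this
      exact (Submodule.neg_mem_iff I).1 this
    · rintro rfl
      exact hx0 (map_zero _)
end

section
/- Let ℓ ≥ 1 be odd and X = R_{k×k,ℓ}, with minimal-weight subspace X^{(ℓ)} = span{u(0,ℓ-1) : u ∈ A} and product u ∘ v = u⁽ˡ⁻¹⁾v ((ℓ-1)-th product) on X^{(ℓ)}. Then for all u, v ∈ A one has u(0,ℓ-1) ∘ v(0,ℓ-1) = (uv-vu)(0,ℓ-1); consequently (X^{(ℓ)}, ∘) is a Lie algebra and the linear map u ↦ u(0,ℓ-1) is a Lie algebra isomorphism from gl(k,F) (matrices with the commutator bracket) onto (X^{(ℓ)}, ∘), independent of ℓ. -/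
/-- **Remark 4.4(1)** (for `R_{k×k,ℓ}`): let `ℓ ≥ 1` be odd and `X = R_{k×k,ℓ}`, with
minimal-weight subspace `X^{(ℓ)} = span{u(0,ℓ-1) : u ∈ A} = {u(0,ℓ-1) : u ∈ A}` and
product `x ∘ y = x⁽ˡ⁻¹⁾y`.  Then `u(0,ℓ-1) ∘ v(0,ℓ-1) = (uv-vu)(0,ℓ-1)`;
consequently `(X^{(ℓ)}, ∘)` is a Lie algebra and `u ↦ u(0,ℓ-1)` is a Lie algebra
isomorphism from `gl(k,F)` onto `(X^{(ℓ)}, ∘)`, independent of `ℓ`. -/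
theorem Rkkl_minimal_weight_lie_gl (F : Type*) [Field F] [CharZero F]
    (k ℓ : ℕ) (hk : 1 ≤ k) (hℓ : 1 ≤ ℓ) (hodd : Odd ℓ) :
    -- the product formula on the minimal-weight subspace
    (∀ u v : Matrix (Fin k) (Fin k) F,
      mProd F k (ℓ - 1) (Finsupp.single ((0 : ℕ), ℓ - 1) u)
          (Finsupp.single ((0 : ℕ), ℓ - 1) v)
        = Finsupp.single ((0 : ℕ), ℓ - 1) (u * v - v * u)) ∧
    -- u ↦ u(0,ℓ-1) is a Lie algebra isomorphism from gl(k,F) onto (X^{(ℓ)}, ∘)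
    (Function.Injective fun u : Matrix (Fin k) (Fin k) F =>
      (Finsupp.single ((0 : ℕ), ℓ - 1) u : MatCarrier F k)) ∧
    (Set.range (fun u : Matrix (Fin k) (Fin k) F =>
        (Finsupp.single ((0 : ℕ), ℓ - 1) u : MatCarrier F k))
      = {x : MatCarrier F k | ∃ u, x = Finsupp.single ((0 : ℕ), ℓ - 1) u}) ∧
    (∀ u v : Matrix (Fin k) (Fin k) F,
      (Finsupp.single ((0 : ℕ), ℓ - 1) (u * v - v * u) : MatCarrier F k)
        = mProd F k (ℓ - 1) (Finsupp.single ((0 : ℕ), ℓ - 1) u)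
            (Finsupp.single ((0 : ℕ), ℓ - 1) v)) ∧
    -- (X^{(ℓ)}, ∘) is a Lie algebra
    (∀ x ∈ {x : MatCarrier F k | ∃ u, x = Finsupp.single ((0 : ℕ), ℓ - 1) u},
     ∀ y ∈ {x : MatCarrier F k | ∃ u, x = Finsupp.single ((0 : ℕ), ℓ - 1) u},
      mProd F k (ℓ - 1) x y
        ∈ {x : MatCarrier F k | ∃ u, x = Finsupp.single ((0 : ℕ), ℓ - 1) u} ∧
      mProd F k (ℓ - 1) x y = -mProd F k (ℓ - 1) y x) ∧
    (∀ x ∈ {x : MatCarrier F k | ∃ u, x = Finsupp.single ((0 : ℕ), ℓ - 1) u},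
     ∀ y ∈ {x : MatCarrier F k | ∃ u, x = Finsupp.single ((0 : ℕ), ℓ - 1) u},
     ∀ z ∈ {x : MatCarrier F k | ∃ u, x = Finsupp.single ((0 : ℕ), ℓ - 1) u},
      mProd F k (ℓ - 1) x (mProd F k (ℓ - 1) y z)
          - mProd F k (ℓ - 1) y (mProd F k (ℓ - 1) x z)
        = mProd F k (ℓ - 1) (mProd F k (ℓ - 1) x y) z) := by
  have hev : Even (ℓ - 1) := Nat.Odd.sub_odd hodd odd_one
  have key : ∀ u v : Matrix (Fin k) (Fin k) F,
      mProd F k (ℓ - 1) (Finsupp.single ((0 : ℕ), ℓ - 1) u)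
          (Finsupp.single ((0 : ℕ), ℓ - 1) v)
        = Finsupp.single ((0 : ℕ), ℓ - 1) (u * v - v * u) := by
    intro u v
    unfold mProd
    rw [Finsupp.sum_single_index, Finsupp.sum_single_index]
    · simp [hev.neg_one_pow, Finsupp.single_sub]
    · simp
    · simp [Finsupp.sum]
  refine ⟨key, Finsupp.single_injective _, ?_, fun u v => (key u v).symm, ?_, ?_⟩
  · ext x
    simp [eq_comm]
  · rintro x ⟨u, rfl⟩ y ⟨v, rfl⟩
    refine ⟨⟨_, key u v⟩, ?_⟩
    rw [key, key, ← Finsupp.single_neg, neg_sub]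
  · rintro x ⟨u, rfl⟩ y ⟨v, rfl⟩ z ⟨w, rfl⟩
    simp only [key]
    rw [← Finsupp.single_sub]
    congr 1
    noncomm_ring
end
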